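/- Let Γ = HNN(H, Σ, θ) with H abelian and Σ infinite. Then Γ contains an infinite abelian subgroup (namely Σ) whose centralizer in Γ contains the subgroup ⟨H, t^{-1}Ht⟩; if moreover 2 ≤ |H/Σ| < ∞ and 3 ≤ |H/θ(Σ)|, this centralizer is non-amenable. -/

import Mathlib

/-!
Since `H` is abelian, `of H` centralizes `of A`; since `t⁻¹ (of (φ a)) t = of a`, so does `t⁻¹ Ht`.

Non-amenability is proved by a ping-pong argument that feeds the mean directly, without producing a
free subgroup. Let `P` be the set of `g` in the extension whose normal form begins with an element
of `A` followed by `t⁻¹`, that is, those `g` for which left multiplication by `t` cancels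
(`Cancels 1`), and let `Q` be its complement. An element of `H \ A` moves `P` into `Q`
(`not_cancels_of_smul`), and an element `t⁻¹ y t` with `y ∉ B` moves `Q` into `P`
(`cancels_conj_smul`). Given three cosets of `B`, there are two such elements whose translates of
`Q` are disjoint. An invariant mean `m` on the centralizer would thus satisfy `m P ≤ m Q` and
`2 * m Q ≤ m P`, hence `m P = m Q = 0`, although `m P + m Q = 1` (`not_amenable_of_pingpong`).
-/


open HNNExtension

/-- A finitely additive left-invariant probability measure ("mean") on all subsets of `G`. -/
structure LeftInvariantMean (G : Type*) [Group G] where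
  m : Set G → ℝ
  nonneg : ∀ s : Set G, 0 ≤ m s
  total : m Set.univ = 1
  addDisjoint : ∀ s t : Set G, Disjoint s t → m (s ∪ t) = m s + m t
  leftInvariant : ∀ (g : G) (s : Set G), m ((g * ·) '' s) = m s

/-- A group is amenable if it admits a finitely additive left-invariant
probability measure on all of its subsets. -/
def Amenable (G : Type*) [Group G] : Prop := Nonempty (LeftInvariantMean G)

theorem LeftInvariantMean.mono {G : Type*} [Group G] (μ : LeftInvariantMean G) {s u : Set G}
    (h : s ⊆ u) : μ.m s ≤ μ.m u := by
  have h1 := μ.addDisjoint s (u \ s) Set.disjoint_sdiff_right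
  rw [Set.union_sdiff_cancel h] at h1
  linarith [μ.nonneg (u \ s)]

/-- Ping-pong obstruction to amenability: `x` moves `P` off itself, while `y`, `z` and `y⁻¹ * z`
all move the complement of `P` into `P`. -/
theorem not_amenable_of_pingpong {G : Type*} [Group G] (P : Set G) (x y z : G)
    (hx : ∀ g ∈ P, x * g ∉ P) (hy : ∀ g ∉ P, y * g ∈ P) (hz : ∀ g ∉ P, z * g ∈ P)
    (hyz : ∀ g ∉ P, y⁻¹ * z * g ∈ P) : ¬ Amenable G := by
  rintro ⟨μ⟩
  have h1 : μ.m P + μ.m Pᶜ = 1 := by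
    rw [← μ.addDisjoint _ _ disjoint_compl_right, Set.union_compl_self, μ.total]
  have h2 : μ.m P ≤ μ.m Pᶜ := by
    rw [← μ.leftInvariant x P]
    apply μ.mono
    rintro _ ⟨g, hg, rfl⟩
    exact hx g hg
  have h3 : μ.m Pᶜ + μ.m Pᶜ ≤ μ.m P := by
    have hd : Disjoint ((y * ·) '' Pᶜ) ((z * ·) '' Pᶜ) := by
      rw [Set.disjoint_left]
      rintro _ ⟨g, hg, rfl⟩ ⟨k, hk, hgk⟩
      apply hg
      have hgk' : g = y⁻¹ * z * k := by
        rw [mul_assoc, eq_inv_mul_iff_mul_eq]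
        exact hgk.symm
      rw [hgk']
      exact hyz k hk
    have h4 := μ.addDisjoint _ _ hd
    rw [μ.leftInvariant, μ.leftInvariant] at h4
    rw [← h4]
    apply μ.mono
    rintro _ (⟨g, hg, rfl⟩ | ⟨g, hg, rfl⟩)
    · exact hy g hg
    · exact hz g hg
  linarith

section PingPong

open NormalWord

variable {H : Type*} [Group H] {A B : Subgroup H} {φ : A ≃* B} {d : TransversalPair H A B}

theorem not_cancels_of_smul {u : ℤˣ} {x : H} (hx : x ∉ toSubgroup A B u) {w : NormalWord d}
    (hw : Cancels u w) : ¬ Cancels u ((of x : HNNExtension H A B φ) • w) := by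
  rw [of_smul_eq_smul]
  rintro ⟨h, -⟩
  rw [group_smul_head] at h
  exact hx ((Subgroup.mul_mem_cancel_right _ hw.1).1 h)

/-- If `t` does not cancel against `w`, then `t • w` begins with an element of `B` followed by `t`;
an element `y ∉ B` destroys this form, so the final `t⁻¹` does not cancel. -/
theorem cancels_conj_smul {y : H} (hy : y ∉ B) {w : NormalWord d} (hw : ¬ Cancels 1 w) :
    Cancels 1 ((t⁻¹ * of y * t : HNNExtension H A B φ) • w) := by
  have h1 : Cancels (-1) ((t : HNNExtension H A B φ) • w) := by
    rw [t_smul_eq_unitsSMul]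
    exact (unitsSMul_cancels_iff φ 1 w).2 hw
  have h2 := not_cancels_of_smul (φ := φ) (x := y) (u := -1)
    (by rwa [toSubgroup_neg_one]) h1
  have h3 := (unitsSMul_cancels_iff φ (-1) _).2 h2
  rw [← t_pow_smul_eq_unitsSMul, neg_neg] at h3
  simpa [mul_smul] using h3

end PingPong

section Centralizer

variable {H : Type*} [CommGroup H] {A B : Subgroup H} {φ : A ≃* B}

theorem of_mem_centralizer (h : H) :
    (of h : HNNExtension H A B φ) ∈
      Subgroup.centralizer (A.map (of : H →* HNNExtension H A B φ) : Set (HNNExtension H A B φ)) := by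
  rw [Subgroup.mem_centralizer_iff]
  rintro _ ⟨a, -, rfl⟩
  rw [← map_mul, ← map_mul, mul_comm]

theorem conj_mem_centralizer (h : H) :
    (t⁻¹ * of h * t : HNNExtension H A B φ) ∈
      Subgroup.centralizer (A.map (of : H →* HNNExtension H A B φ) : Set (HNNExtension H A B φ)) := by
  rw [Subgroup.mem_centralizer_iff]
  rintro _ ⟨a, ha, rfl⟩
  have h1 : (of a : HNNExtension H A B φ) = t⁻¹ * of (φ ⟨a, ha⟩ : H) * t := by
    rw [equiv_eq_conj]
    group
  have h2 : (of (φ ⟨a, ha⟩ : H) : HNNExtension H A B φ) * of h = of h * of (φ ⟨a, ha⟩ : H) := by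
    rw [← map_mul, ← map_mul, mul_comm]
  rw [h1]
  simp only [mul_assoc, mul_inv_cancel_left]
  rw [← mul_assoc (of _) (of h), h2, mul_assoc]

end Centralizer

/-- Let `Γ = HNN(H,Σ,θ)` with `H` abelian and `Σ` infinite. Then `Σ` gives an infinite
abelian subgroup of `Γ` whose centralizer contains `⟨H, t⁻¹Ht⟩`; if moreover
`2 ≤ |H/Σ| < ∞` and `3 ≤ |H/θ(Σ)|`, this centralizer is non-amenable. -/
theorem hnn_infinite_abelian_with_big_centralizer {H : Type*} [CommGroup H]
    (A B : Subgroup H) (φ : A ≃* B) (hA : Infinite A) :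
    Infinite (A.map (of : H →* HNNExtension H A B φ)) ∧
    (∀ x y : A.map (of : H →* HNNExtension H A B φ), x * y = y * x) ∧
    Subgroup.closure ((Set.range fun h : H => (of h : HNNExtension H A B φ)) ∪
        (Set.range fun h : H => (t⁻¹ * of h * t : HNNExtension H A B φ))) ≤
      Subgroup.centralizer (A.map (of : H →* HNNExtension H A B φ)) ∧
    (A ≠ ⊤ → A.index ≠ 0 → (∃ x y z : H ⧸ B, x ≠ y ∧ x ≠ z ∧ y ≠ z) →
      ¬ Amenable (Subgroup.centralizer
        ((A.map (of : H →* HNNExtension H A B φ)) : Set (HNNExtension H A B φ)))) := by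
  refine ⟨?_, ?_, ?_, ?_⟩
  · exact (A.equivMapOfInjective _ (of_injective φ)).toEquiv.infinite_iff.1 hA
  · rintro ⟨_, a, -, rfl⟩ ⟨_, b, -, rfl⟩
    ext
    simp only [Subgroup.coe_mul, ← map_mul, mul_comm]
  · rw [Subgroup.closure_le]
    rintro _ (⟨h, rfl⟩ | ⟨h, rfl⟩)
    · exact of_mem_centralizer h
    · exact conj_mem_centralizer h
  · rintro hAtop - ⟨p, q, r, hpq, hpr, hqr⟩
    obtain ⟨x, hx⟩ : ∃ x, x ∉ A := by
      by_contra! h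
      exact hAtop ((Subgroup.eq_top_iff' A).2 h)
    induction p using QuotientGroup.induction_on with | H p =>
    induction q using QuotientGroup.induction_on with | H q =>
    induction r using QuotientGroup.induction_on with | H r =>
    rw [Ne, QuotientGroup.eq] at hpq hpr hqr
    obtain ⟨d⟩ := NormalWord.TransversalPair.nonempty H A B
    refine not_amenable_of_pingpong
      {g | NormalWord.Cancels 1 ((g : HNNExtension H A B φ) • (NormalWord.empty : NormalWord d))}
      ⟨of x, of_mem_centralizer x⟩ ⟨_, conj_mem_centralizer (p⁻¹ * q)⟩
      ⟨_, conj_mem_centralizer (p⁻¹ * r)⟩ ?_ ?_ ?_ ?_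
    · intro g hg
      simp only [Set.mem_ofPred_eq, Subgroup.coe_mul, mul_smul] at hg ⊢
      exact not_cancels_of_smul (u := 1) hx hg
    · intro g hg
      simp only [Set.mem_ofPred_eq, Subgroup.coe_mul, mul_smul _ (g : HNNExtension H A B φ)] at hg ⊢
      exact cancels_conj_smul hpq hg
    · intro g hg
      simp only [Set.mem_ofPred_eq, Subgroup.coe_mul, mul_smul _ (g : HNNExtension H A B φ)] at hg ⊢
      exact cancels_conj_smul hpr hg
    · intro g hg
      have h1 : (t⁻¹ * of (p⁻¹ * q) * t : HNNExtension H A B φ)⁻¹ * (t⁻¹ * of (p⁻¹ * r) * t) =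
          t⁻¹ * of (q⁻¹ * r) * t := by
        simp only [map_mul, map_inv]
        group
      simp only [Set.mem_ofPred_eq, Subgroup.coe_mul, Subgroup.coe_inv,
        mul_smul _ (g : HNNExtension H A B φ)] at hg ⊢
      rw [h1]
      exact cancels_conj_smul hqr hg
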